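/- As $N \to \infty$, $\sqrt{N}\,(\Psi_N(0) - \Psi_N(0-)) \to \sqrt{3/(4\pi)}$; that is, the jump of $\Psi_N$ at the origin is asymptotic to $\sqrt{3/(2N)}\,\varphi(0) = \sqrt{3/(4\pi N)}$. -/

import Mathlib

open MeasureTheory ProbabilityTheory Filter

noncomputable section

/-- `D_N = ∑ X_i`. -/
def DN {Ω : Type*} (X : ℕ → Ω → ℝ) (N : ℕ) (ω : Ω) : ℝ := ∑ i ∈ Finset.range N, X i ω

/-- `T_N = ∑ X_i²`. -/
def TN {Ω : Type*} (X : ℕ → Ω → ℝ) (N : ℕ) (ω : Ω) : ℝ := ∑ i ∈ Finset.range N, (X i ω) ^ 2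

/-- `W_N = D_N / √T_N` if `T_N > 0`, else `0`. -/
def WN {Ω : Type*} (X : ℕ → Ω → ℝ) (N : ℕ) (ω : Ω) : ℝ :=
  if 0 < TN X N ω then DN X N ω / Real.sqrt (TN X N ω) else 0

/-- The standard normal density `φ`. -/
def stdPhi (x : ℝ) : ℝ := Real.exp (-x ^ 2 / 2) / Real.sqrt (2 * Real.pi)

/-- The standard normal distribution function `Φ`. -/
def stdCDF (x : ℝ) : ℝ := ∫ t in Set.Iic x, stdPhi t

/-- The oscillatory term `Λ_N(w)`. -/
def Lambda (N : ℕ) (w : ℝ) : ℝ :=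
  -Real.sqrt (3 / 2) * stdPhi w *
    ∑ n ∈ Finset.range (N + 1),
      3 / Real.sqrt (Real.pi * N) * Real.exp (-(9 / N) * ((n : ℝ) - N / 3) ^ 2) *
        (Int.fract (w * Real.sqrt (2 * n)) - 1 / 2)

/-- The expansion `Ψ_N`: for `w ≥ 0` it is `Φ(w) + N^{-1/2} Λ_N(w)`, and for `w > 0` one sets
`Ψ_N(-w) = 1 - Ψ_N(w-)`, where `Ψ_N(w-)` denotes the left limit at `w`. -/
def Psi (N : ℕ) (w : ℝ) : ℝ :=
  if 0 ≤ w then stdCDF w + Lambda N w / Real.sqrt N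
  else 1 - Function.leftLim (fun x ↦ stdCDF x + Lambda N x / Real.sqrt N) (-w)

/-!
Let `F_N = Φ + N^{-1/2} Λ_N`. Since the fractional part is right-continuous, so is `F_N`, and hence
the left limits `F_N(w-)` also tend to `F_N(0)` as `w ↓ 0`. Thus `Ψ_N(0-) = 1 - F_N(0)`, and since
`Φ(0) = 1/2`, the jump of `Ψ_N` at `0` is `2 F_N(0) - 1 = 2 N^{-1/2} Λ_N(0)`.

At `w = 0` each summand of `Λ_N` is `-1/2` times a weight, and the weights form a Riemann sum of
mesh `N^{-1/2}` for the normal density of variance `1/18`. They therefore add up to `1` in the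
limit, and `2 Λ_N(0) → √(3/2) φ(0)`.
-/

open Set Topology Function
open scoped NNReal

section LeftLim

variable {α β : Type*} [LinearOrder α] [TopologicalSpace α] [OrderTopology α]
  [TopologicalSpace β] [RegularSpace β] {f : α → β} {a : α} {b : β}

lemma tendsto_leftLim_nhdsGT (h : Tendsto f (𝓝[>] a) (𝓝 b)) :
    Tendsto (leftLim f) (𝓝[>] a) (𝓝 b) := by
  refine (closed_nhds_basis b).tendsto_right_iff.2 fun s ⟨hs, hs_closed⟩ ↦ ?_
  filter_upwards [eventually_eventually_nhdsWithin.2 (h hs), self_mem_nhdsWithin] with x hx hax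
  rw [isOpen_Ioi.nhdsWithin_eq hax] at hx
  exact hs_closed.mem_of_mapClusterPt ((mapClusterPt_leftLim f x).mono nhdsWithin_le_nhds) hx

end LeftLim

lemma continuousWithinAt_fract_Ici {α : Type*} [Ring α] [LinearOrder α] [IsStrictOrderedRing α]
    [FloorRing α] [TopologicalSpace α] [OrderClosedTopology α] [IsTopologicalAddGroup α] (x : α) :
    ContinuousWithinAt Int.fract (Ici x) x := by
  have hfloor : (fun y ↦ y - (⌊x⌋ : α)) =ᶠ[𝓝[≥] x] Int.fract := by
    filter_upwards [tendsto_pure.1 (tendsto_floor_right_pure_floor x)] with y hy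
    rw [Int.fract, hy]
  exact (continuous_sub_right (⌊x⌋ : α)).continuousWithinAt.congr_of_eventuallyEq hfloor.symm rfl

section SetIntegral

variable {E : Type*} [NormedAddCommGroup E] [NormedSpace ℝ E] {f : ℝ → E}

lemma continuous_setIntegral_Iic {μ : Measure ℝ} [NullSingletonClass μ] (hf : Integrable f μ) :
    Continuous fun x ↦ ∫ t in Iic x, f t ∂μ :=
  continuous_iff_continuousAt.2 fun x ↦
    hf.integrableOn.continuousOn_Iic_primitive_Iic.continuousAt (Iic_mem_nhds (lt_add_one x))

lemma setIntegral_Iic_zero_of_even (hf : Integrable f) (heven : Function.Even f) :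
    ∫ t in Iic 0, f t = (1 / 2 : ℝ) • ∫ t, f t := by
  have hsymm : ∫ t in Ioi 0, f t = ∫ t in Iic 0, f t := by
    simpa only [heven _, neg_zero] using (integral_comp_neg_Iic (0 : ℝ) f).symm
  rw [← intervalIntegral.integral_Iic_add_Ioi hf.integrableOn hf.integrableOn, hsymm, ← two_smul ℝ,
    smul_smul]
  norm_num

end SetIntegral

section RiemannSum

/-- The greatest point of the lattice `c + hℤ` that is at most `x`, for a mesh `h > 0`. It turns a
left-endpoint Riemann sum of `f` over this lattice into the integral of `f ∘ latticeFloor c h`. -/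
def latticeFloor (c h x : ℝ) : ℝ := c + ⌊(x - c) / h⌋ * h

variable {c h x : ℝ}

lemma latticeFloor_le (hh : 0 < h) : latticeFloor c h x ≤ x := by
  have := (le_div_iff₀ hh).1 (Int.floor_le ((x - c) / h))
  rw [latticeFloor]
  linarith

lemma sub_lt_latticeFloor (hh : 0 < h) : x - h < latticeFloor c h x := by
  have := (div_lt_iff₀ hh).1 (Int.lt_floor_add_one ((x - c) / h))
  rw [latticeFloor]
  linarith

lemma latticeFloor_eq_of_mem_Ico {n : ℤ} (hx : x ∈ Ico (c + n * h) (c + (n + 1) * h)) :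
    latticeFloor c h x = c + n * h := by
  have hh : 0 < h := by linarith [hx.1.trans_lt hx.2]
  have hfloor : ⌊(x - c) / h⌋ = n := by
    rw [Int.floor_eq_iff, le_div_iff₀ hh, div_lt_iff₀ hh]
    constructor <;> linarith [hx.1, hx.2]
  rw [latticeFloor, hfloor]

lemma tendsto_latticeFloor {ι : Type*} {l : Filter ι} {c h : ι → ℝ} (hh : Tendsto h l (𝓝[>] 0))
    (x : ℝ) : Tendsto (fun i ↦ latticeFloor (c i) (h i) x) l (𝓝 x) := by
  obtain ⟨hh_lim, hh_pos⟩ := tendsto_nhdsWithin_iff.1 hh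
  refine tendsto_of_tendsto_of_tendsto_of_le_of_le' (by simpa using hh_lim.const_sub x)
    tendsto_const_nhds ?_ ?_
  · exact hh_pos.mono fun i hi ↦ (sub_lt_latticeFloor hi).le
  · exact hh_pos.mono fun i hi ↦ latticeFloor_le hi

variable {E : Type*} [NormedAddCommGroup E]

lemma stronglyMeasurable_comp_latticeFloor (f : ℝ → E) (c h : ℝ) :
    StronglyMeasurable fun x ↦ f (latticeFloor c h x) :=
  (StronglyMeasurable.of_discrete (f := fun n : ℤ ↦ f (c + n * h))).comp_measurable
    (by fun_prop : Measurable fun x : ℝ ↦ ⌊(x - c) / h⌋)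

variable [NormedSpace ℝ E]

lemma sum_smul_lattice_eq_integral [CompleteSpace E] (f : ℝ → E) (c : ℝ) (hh : 0 ≤ h) (m : ℕ) :
    ∑ n ∈ Finset.range m, h • f (c + n * h) =
      ∫ x in c..(c + m * h), f (latticeFloor c h x) := by
  have hcell (n : ℕ) : EqOn (fun _ ↦ f (c + n * h)) (fun x ↦ f (latticeFloor c h x))
      (uIoo (c + n * h) (c + (n + 1 : ℕ) * h)) := by
    intro x hx
    rw [uIoo_of_le (by gcongr; simp)] at hx
    simp only
    rw [latticeFloor_eq_of_mem_Ico (n := n) (by simpa using Ioo_subset_Ico_self hx)]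
    simp
  have hadj := intervalIntegral.sum_integral_adjacent_intervals (μ := volume) (n := m)
    (f := fun x ↦ f (latticeFloor c h x)) (a := fun n : ℕ ↦ c + n * h)
    fun n _ ↦ intervalIntegrable_const.congr_uIoo (hcell n)
  simp only [Nat.cast_zero, zero_mul, add_zero] at hadj
  rw [← hadj]
  refine Finset.sum_congr rfl fun n _ ↦ ?_
  rw [← intervalIntegral.integral_congr_uIoo (hcell n), intervalIntegral.integral_const]
  congr 1
  push_cast
  ring

theorem tendsto_sum_smul_lattice_integral [CompleteSpace E] {ι : Type*} {l : Filter ι}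
    [l.IsCountablyGenerated] {f : ℝ → E} {bound : ℝ → ℝ} {δ : ℝ} {c h : ι → ℝ} {m : ι → ℕ}
    (hf : ∀ᵐ x, ContinuousAt f x) (hδ : 0 < δ) (hbound : Integrable bound)
    (hf_le : ∀ y, ∀ x ∈ Icc (y - δ) y, ‖f x‖ ≤ bound y)
    (hh : Tendsto h l (𝓝[>] 0)) (hc : Tendsto c l atBot)
    (hm : Tendsto (fun i ↦ c i + m i * h i) l atTop) :
    Tendsto (fun i ↦ ∑ n ∈ Finset.range (m i), h i • f (c i + n * h i)) l (𝓝 (∫ x, f x)) := by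
  obtain ⟨hh_lim, hh_pos⟩ := tendsto_nhdsWithin_iff.1 hh
  have hint : Tendsto
      (fun i ↦ ∫ x, (Ioc (c i) (c i + m i * h i)).indicator
        (fun x ↦ f (latticeFloor (c i) (h i) x)) x) l (𝓝 (∫ x, f x)) := by
    refine tendsto_integral_filter_of_dominated_convergence bound ?_ ?_ hbound ?_
    · exact Eventually.of_forall fun i ↦ ((stronglyMeasurable_comp_latticeFloor f _ _).indicator
        measurableSet_Ioc).aestronglyMeasurable
    · filter_upwards [hh_pos, hh_lim.eventually_le_const hδ] with i hi hiδ
      filter_upwards with x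
      have hmem : latticeFloor (c i) (h i) x ∈ Icc (x - δ) x :=
        ⟨(sub_le_sub_left hiδ x).trans (sub_lt_latticeFloor hi).le, latticeFloor_le hi⟩
      exact (norm_indicator_le_norm_self _ _).trans (hf_le x _ hmem)
    · filter_upwards [hf] with x hx
      refine (hx.tendsto.comp (tendsto_latticeFloor (c := c) hh x)).congr' ?_
      filter_upwards [hc.eventually_lt_atBot x, hm.eventually_ge_atTop x] with i hci hmi
      rw [comp_apply, indicator_of_mem (mem_Ioc.2 ⟨hci, hmi⟩)]
  refine hint.congr' (hh_pos.mono fun i (hi : 0 < h i) ↦ ?_)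
  simp only [sum_smul_lattice_eq_integral f _ hi.le]
  rw [integral_indicator measurableSet_Ioc,
    intervalIntegral.integral_of_le (le_add_of_nonneg_right (by positivity))]

end RiemannSum

section Gaussian

lemma continuous_gaussianPDFReal (μ : ℝ) (v : ℝ≥0) : Continuous (gaussianPDFReal μ v) := by
  unfold gaussianPDFReal
  fun_prop

lemma even_gaussianPDFReal_zero (v : ℝ≥0) : Function.Even (gaussianPDFReal 0 v) := fun x ↦ by
  simp [gaussianPDFReal]

lemma gaussianPDFReal_le_of_abs_sub_le (μ : ℝ) (v : ℝ≥0) {x y : ℝ} (hxy : |x - y| ≤ 1) :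
    gaussianPDFReal μ v x ≤
      √2 * Real.exp (1 / (2 * v)) * gaussianPDFReal μ (2 * v) y := by
  -- `(y - μ)² ≤ 2 (x - μ)² + 2 (y - x)²`: doubling the variance absorbs the shift.
  have hsq : (y - μ) ^ 2 ≤ 2 * (x - μ) ^ 2 + 2 := by
    nlinarith [sq_nonneg (2 * x - y - μ), (sq_le_one_iff_abs_le_one (x - y)).2 hxy]
  have hexp : -(x - μ) ^ 2 / (2 * v) ≤ 1 / (2 * v) + -(y - μ) ^ 2 / (2 * (2 * v)) := by
    calc -(x - μ) ^ 2 / (2 * v) = -(2 * (x - μ) ^ 2) / (2 * (2 * v)) := by ring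
      _ ≤ (2 - (y - μ) ^ 2) / (2 * (2 * v)) := by gcongr; linarith
      _ = 1 / (2 * v) + -(y - μ) ^ 2 / (2 * (2 * v)) := by ring
  have hsqrt : (√(2 * Real.pi * v))⁻¹ = √2 * (√(2 * Real.pi * (2 * v)))⁻¹ := by
    rw [show 2 * Real.pi * (2 * v) = 2 * (2 * Real.pi * v) by ring, Real.sqrt_mul zero_le_two,
      mul_inv, mul_inv_cancel_left₀ (by positivity)]
  calc gaussianPDFReal μ v x
      ≤ √2 * (√(2 * Real.pi * (2 * v)))⁻¹ *
          Real.exp (1 / (2 * v) + -(y - μ) ^ 2 / (2 * (2 * v))) := by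
        rw [gaussianPDFReal, hsqrt]
        gcongr
    _ = √2 * Real.exp (1 / (2 * v)) * gaussianPDFReal μ (2 * v) y := by
        rw [gaussianPDFReal, Real.exp_add]
        push_cast
        ring

theorem tendsto_sum_mul_gaussianPDFReal {ι : Type*} {l : Filter ι} [l.IsCountablyGenerated]
    (μ : ℝ) {v : ℝ≥0} (hv : v ≠ 0) {c h : ι → ℝ} {m : ι → ℕ} (hh : Tendsto h l (𝓝[>] 0))
    (hc : Tendsto c l atBot) (hm : Tendsto (fun i ↦ c i + m i * h i) l atTop) :
    Tendsto (fun i ↦ ∑ n ∈ Finset.range (m i), h i * gaussianPDFReal μ v (c i + n * h i)) l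
      (𝓝 1) := by
  rw [← integral_gaussianPDFReal_eq_one μ hv]
  refine tendsto_sum_smul_lattice_integral (δ := 1)
    (Eventually.of_forall fun x ↦ (continuous_gaussianPDFReal μ v).continuousAt) one_pos
    ((integrable_gaussianPDFReal μ (2 * v)).const_mul (√2 * Real.exp (1 / (2 * v)))) ?_ hh hc hm
  intro y x hx
  rw [Real.norm_of_nonneg (gaussianPDFReal_nonneg μ v x)]
  exact gaussianPDFReal_le_of_abs_sub_le μ v (abs_le.2 ⟨by linarith [hx.1], by linarith [hx.2]⟩)

lemma stdPhi_eq_gaussianPDFReal : stdPhi = gaussianPDFReal 0 1 := by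
  ext x
  simp [stdPhi, gaussianPDFReal, div_eq_inv_mul]

lemma integrable_stdPhi : Integrable stdPhi :=
  stdPhi_eq_gaussianPDFReal ▸ integrable_gaussianPDFReal 0 1

lemma continuous_stdPhi : Continuous stdPhi :=
  stdPhi_eq_gaussianPDFReal ▸ continuous_gaussianPDFReal 0 1

lemma continuous_stdCDF : Continuous stdCDF := continuous_setIntegral_Iic integrable_stdPhi

lemma stdCDF_zero : stdCDF 0 = 1 / 2 := by
  rw [stdCDF, stdPhi_eq_gaussianPDFReal, setIntegral_Iic_zero_of_even
    (integrable_gaussianPDFReal 0 1) (even_gaussianPDFReal_zero 1),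
    integral_gaussianPDFReal_eq_one 0 one_ne_zero, smul_eq_mul, mul_one]

end Gaussian

section Jump

lemma continuousWithinAt_Lambda_Ici (N : ℕ) (w : ℝ) :
    ContinuousWithinAt (Lambda N) (Ici w) w := by
  have hfract (n : ℕ) :
      ContinuousWithinAt (fun x : ℝ ↦ Int.fract (x * √(2 * n))) (Ici w) w :=
    (continuousWithinAt_fract_Ici _).comp (continuous_mul_const _).continuousWithinAt
      fun _ hx ↦ mul_le_mul_of_nonneg_right hx (Real.sqrt_nonneg _)
  exact (continuous_const.mul continuous_stdPhi).continuousWithinAt.mul <|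
    tendsto_finsetSum _ fun n _ ↦ ((hfract n).sub_const _).const_mul _

lemma Psi_zero (N : ℕ) : Psi N 0 = 1 / 2 + Lambda N 0 / √N := by
  rw [Psi, if_pos le_rfl, stdCDF_zero]

lemma leftLim_Psi_zero (N : ℕ) : leftLim (Psi N) 0 = 1 / 2 - Lambda N 0 / √N := by
  have hright : Tendsto (fun x ↦ stdCDF x + Lambda N x / √N) (𝓝[>] 0)
      (𝓝 (1 / 2 + Lambda N 0 / √N)) := by
    rw [← stdCDF_zero]
    exact (continuous_stdCDF.continuousWithinAt.add
      ((continuousWithinAt_Lambda_Ici N 0).div_const _)).tendsto.mono_left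
        (nhdsWithin_mono _ Ioi_subset_Ici_self)
  have hneg : Tendsto (fun w : ℝ ↦ -w) (𝓝[<] 0) (𝓝[>] 0) := by
    simpa using tendsto_neg_nhdsLT (a := (0 : ℝ))
  refine leftLim_eq_of_tendsto ?_
  rw [show 1 / 2 - Lambda N 0 / √N = 1 - (1 / 2 + Lambda N 0 / √N) by ring]
  refine (((tendsto_leftLim_nhdsGT hright).comp hneg).const_sub 1).congr' ?_
  filter_upwards [self_mem_nhdsWithin] with w (hw : w < 0)
  rw [Psi, if_neg hw.not_ge, comp_apply]

lemma sqrt_mul_Psi_jump {N : ℕ} (hN : 0 < N) :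
    √N * (Psi N 0 - leftLim (Psi N) 0) = 2 * Lambda N 0 := by
  have : 0 < √(N : ℝ) := by positivity
  rw [Psi_zero, leftLim_Psi_zero]
  field_simp
  ring

lemma sqrt_mul_stdPhi_zero : √(3 / 2) * stdPhi 0 = √(3 / (4 * Real.pi)) := by
  rw [show 3 / (4 * Real.pi) = 3 / 2 / (2 * Real.pi) by field_simp; norm_num,
    Real.sqrt_div (by norm_num)]
  simp [stdPhi, div_eq_mul_inv]

lemma Lambda_weight_eq_gaussianPDFReal {N : ℕ} (hN : 0 < N) (n : ℕ) :
    3 / √(Real.pi * N) * Real.exp (-(9 / N) * ((n : ℝ) - N / 3) ^ 2) =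
      (√N)⁻¹ * gaussianPDFReal 0 (1 / 18) (-(√N / 3) + n * (√N)⁻¹) := by
  have : 0 < √(N : ℝ) := by positivity
  have hpoint : -(√(N : ℝ) / 3) + n * (√N)⁻¹ = (n - N / 3) / √N := by
    have hsq : √(N : ℝ) ^ 2 = N := Real.sq_sqrt N.cast_nonneg
    field_simp
    linear_combination -hsq
  have hvar : √(2 * Real.pi * ((1 / 18 : ℝ≥0) : ℝ)) = √Real.pi / 3 := by
    rw [show 2 * Real.pi * ((1 / 18 : ℝ≥0) : ℝ) = Real.pi / 3 ^ 2 by push_cast; ring,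
      Real.sqrt_div Real.pi_pos.le, Real.sqrt_sq (by norm_num)]
  have hexp : -(((n : ℝ) - N / 3) / √N - 0) ^ 2 / (2 * ((1 / 18 : ℝ≥0) : ℝ)) =
      -(9 / N) * ((n : ℝ) - N / 3) ^ 2 := by
    rw [sub_zero, div_pow, Real.sq_sqrt N.cast_nonneg]
    push_cast
    ring
  rw [hpoint, gaussianPDFReal, hvar, hexp, Real.sqrt_mul Real.pi_pos.le]
  field_simp

lemma two_mul_Lambda_zero {N : ℕ} (hN : 0 < N) :
    2 * Lambda N 0 = √(3 / (4 * Real.pi)) *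
      ∑ n ∈ Finset.range (N + 1),
        (√N)⁻¹ * gaussianPDFReal 0 (1 / 18) (-(√N / 3) + n * (√N)⁻¹) := by
  simp only [Lambda, Lambda_weight_eq_gaussianPDFReal hN, zero_mul, Int.fract_zero,
    ← Finset.sum_mul, ← sqrt_mul_stdPhi_zero]
  ring

theorem tendsto_two_mul_Lambda_zero :
    Tendsto (fun N ↦ 2 * Lambda N 0) atTop (𝓝 (√(3 / (4 * Real.pi)))) := by
  have hsqrt : Tendsto (fun N : ℕ ↦ √(N : ℝ)) atTop atTop :=
    Real.tendsto_sqrt_atTop.comp tendsto_natCast_atTop_atTop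
  have hmesh : Tendsto (fun N : ℕ ↦ (√(N : ℝ))⁻¹) atTop (𝓝[>] 0) :=
    tendsto_inv_atTop_nhdsGT_zero.comp hsqrt
  have hlower : Tendsto (fun N : ℕ ↦ -(√(N : ℝ) / 3)) atTop atBot :=
    tendsto_neg_atTop_atBot.comp (hsqrt.atTop_div_const three_pos)
  have hupper : Tendsto (fun N : ℕ ↦ -(√(N : ℝ) / 3) + (N + 1 : ℕ) * (√(N : ℝ))⁻¹) atTop atTop := by
    refine tendsto_atTop_mono (fun N ↦ ?_) (hsqrt.atTop_mul_const (r := 2 / 3) (by norm_num))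
    have hdiv : (N : ℝ) * (√(N : ℝ))⁻¹ = √N := by rw [← div_eq_mul_inv, Real.div_sqrt]
    push_cast
    rw [add_mul, hdiv, one_mul]
    linarith [inv_nonneg.2 (Real.sqrt_nonneg (N : ℝ))]
  have hsum := tendsto_sum_mul_gaussianPDFReal (v := 1 / 18) 0 (by norm_num) hmesh hlower hupper
  refine (mul_one (√(3 / (4 * Real.pi))) ▸ hsum.const_mul _).congr' ?_
  filter_upwards [eventually_gt_atTop 0] with N hN using (two_mul_Lambda_zero hN).symm

end Jump

theorem statement5 :
    Tendsto (fun N : ℕ ↦ Real.sqrt N * (Psi N 0 - Function.leftLim (Psi N) 0)) atTop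
      (nhds (Real.sqrt (3 / (4 * Real.pi)))) := by
  refine tendsto_two_mul_Lambda_zero.congr' ?_
  filter_upwards [eventually_gt_atTop 0] with N hN using (sqrt_mul_Psi_jump hN).symm
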